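/- For every b ∈ (0,π) and every c with 0 < c < π/2 − |b − π/2|, there exist constants C > 0 and z₁ < 0 such that |ξ(b,z) + √(−z)/(4π)| ≤ C·e^{−c√(−z)} for all z ≤ z₁; in particular ξ(b,z) = −√(−z)/(4π) + O(e^{−c√(−z)}) as z → −∞. -/

import Mathlib

open Real Filter Topology Asymptotics

/-- The digamma function `ψ = Γ'/Γ`. -/
noncomputable def digamma (x : ℝ) : ℝ := deriv Real.Gamma x / Real.Gamma x

/-- The regularized Green's function `ξ(b,z)` of a point interaction at height
`b ∈ (0,π)` in the Dirichlet layer `ℝ²×(0,π)`, for energies `z < 1`: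
`ξ(b,z) = −(1/π²) Σ_{n≥1} ln√(1 − z/n²)·sin²(n b)
          + (1/(4π²))·[γ + ψ(b/π) + (π/2)·cot b]`. -/
noncomputable def xiLayer (b z : ℝ) : ℝ :=
  -(1 / π ^ 2) *
      ∑' n : ℕ, Real.log (Real.sqrt (1 - z / ((n : ℝ) + 1) ^ 2)) * Real.sin (((n : ℝ) + 1) * b) ^ 2
    + (1 / (4 * π ^ 2)) *
      (Real.eulerMascheroniConstant + digamma (b / π) + (π / 2) * Real.cot b)

/-!
The function `ξ(b, z) + √(-z) / (4π)` is the tail of a convergent integral. Write `x = b / π`,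
`T = 2π√(-z)` and `g_x(t) = (e^{-t} - e^{-xt}) / (1 - e^{-t})`. By Gauss, `∫₀^∞ g_x = γ + ψ(x)`,
and the reflection formula turns the constant term of `ξ` into `(∫₀^∞ g_x + ∫₀^∞ g_{1-x}) / (8π²)`.
The Fourier series of `y ↦ e^{-ty} + e^{-t(1-y)}` on `[0, 1)`, subtracted from its value at `0`,
gives `∑_{n ≥ 1} 8t / (t² + (2πn)²) sin²(πnx) = 1 + g_x(t) + g_{1-x}(t)`; integrated over `[0, T]`
it turns the logarithmic series of `ξ` into `-(T + ∫₀^T g_x + ∫₀^T g_{1-x}) / (8π²)`. Hence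
`ξ(b, z) + √(-z) / (4π) = (∫_T^∞ g_x + ∫_T^∞ g_{1-x}) / (8π²)`, and `|g_x(t)| ≤ e^{-xt}`.
-/

open MeasureTheory Set

section Digamma

lemma hasDerivAt_log_Gamma {x : ℝ} (hx : 0 < x) :
    HasDerivAt (fun y ↦ log (Gamma y)) (digamma x) x :=
  (differentiableOn_Gamma_Ioi.differentiableAt (Ioi_mem_nhds hx)).hasDerivAt.log
    (Gamma_pos_of_pos hx).ne'

lemma log_Gamma_add_one {x : ℝ} (hx : 0 < x) :
    log (Gamma (x + 1)) = log x + log (Gamma x) := by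
  rw [Gamma_add_one hx.ne', log_mul hx.ne' (Gamma_pos_of_pos hx).ne']

lemma digamma_add_one {x : ℝ} (hx : 0 < x) : digamma (x + 1) = x⁻¹ + digamma x := by
  have hshift : HasDerivAt (fun y ↦ log (Gamma (y + 1))) (digamma (x + 1)) x :=
    (hasDerivAt_log_Gamma (by positivity)).comp_add_const x 1
  have hsum : HasDerivAt (fun y ↦ log y + log (Gamma y)) (x⁻¹ + digamma x) x :=
    (hasDerivAt_log hx.ne').add (hasDerivAt_log_Gamma hx)
  refine hshift.unique (hsum.congr_of_eventuallyEq ?_)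
  filter_upwards [lt_mem_nhds hx] with y hy using log_Gamma_add_one hy

lemma digamma_add_natCast {x : ℝ} (hx : 0 < x) (n : ℕ) :
    digamma (n + x) = digamma x + ∑ i ∈ Finset.range n, ((i : ℝ) + x)⁻¹ := by
  induction n with
  | zero => simp
  | succ n ih =>
    rw [Nat.cast_succ, add_right_comm, digamma_add_one (by positivity), ih, Finset.sum_range_succ]
    ring

lemma log_Gamma_add_log_Gamma_one_sub {x : ℝ} (hx : 0 < x) (hx1 : x < 1) :
    log (Gamma x) + log (Gamma (1 - x)) = log π - log (sin (π * x)) := by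
  have hsin : 0 < sin (π * x) := sin_pos_of_pos_of_lt_pi (by positivity) (by nlinarith [pi_pos])
  rw [← log_mul (Gamma_pos_of_pos hx).ne' (Gamma_pos_of_pos (sub_pos.2 hx1)).ne',
    Gamma_mul_Gamma_one_sub, log_div pi_ne_zero hsin.ne']

lemma digamma_one_sub {x : ℝ} (hx : 0 < x) (hx1 : x < 1) :
    digamma (1 - x) = digamma x + π * cot (π * x) := by
  have hsin : 0 < sin (π * x) := sin_pos_of_pos_of_lt_pi (by positivity) (by nlinarith [pi_pos])
  have hGamma : HasDerivAt (fun y ↦ log (Gamma y) + log (Gamma (1 - y)))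
      (digamma x + -digamma (1 - x)) x :=
    (hasDerivAt_log_Gamma hx).add ((hasDerivAt_log_Gamma (sub_pos.2 hx1)).comp_const_sub 1 x)
  have hlogsin : HasDerivAt (fun y ↦ log π - log (sin (π * y)))
      (-(cos (π * x) * (π * 1) / sin (π * x))) x :=
    ((((hasDerivAt_id x).const_mul π).sin).log hsin.ne').const_sub (log π)
  have heq := hGamma.unique (hlogsin.congr_of_eventuallyEq (by
    filter_upwards [Ioo_mem_nhds hx hx1] with y hy
      using log_Gamma_add_log_Gamma_one_sub hy.1 hy.2))
  rw [cot_eq_cos_div_sin]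
  linear_combination -heq

lemma slope_log_Gamma_add_one {x : ℝ} (hx : 0 < x) :
    slope (log ∘ Gamma) x (x + 1) = log x := by
  simp [slope_def_field, log_Gamma_add_one hx]

lemma digamma_le_log {x : ℝ} (hx : 0 < x) : digamma x ≤ log x :=
  slope_log_Gamma_add_one hx ▸ convexOn_log_Gamma.le_slope_of_hasDerivAt hx
    (show 0 < x + 1 by positivity) (lt_add_one x) (hasDerivAt_log_Gamma hx)

lemma log_le_inv_add_digamma {x : ℝ} (hx : 0 < x) : log x ≤ x⁻¹ + digamma x :=
  have hx1 : 0 < x + 1 := by positivity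
  slope_log_Gamma_add_one hx ▸ digamma_add_one hx ▸ convexOn_log_Gamma.slope_le_of_hasDerivAt hx
    hx1 (lt_add_one x) (hasDerivAt_log_Gamma hx1)

lemma tendsto_log_sub_digamma : Tendsto (fun x ↦ log x - digamma x) atTop (𝓝 0) := by
  refine squeeze_zero' ?_ ?_ tendsto_inv_atTop_zero
  · filter_upwards [eventually_gt_atTop 0] with x hx using sub_nonneg.2 (digamma_le_log hx)
  · filter_upwards [eventually_gt_atTop 0] with x hx
      using sub_le_iff_le_add.2 (log_le_inv_add_digamma hx)

lemma summable_inv_natCast_add_sq (x : ℝ) : Summable fun n : ℕ ↦ ((n + x) ^ 2)⁻¹ := by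
  refine ((summable_one_div_nat_add_rpow x 2).2 one_lt_two).congr fun n ↦ ?_
  rw [rpow_two, sq_abs, one_div]

lemma summable_inv_natCast_add_sub_inv {x y : ℝ} (hx : 0 < x) (hy : 0 < y) :
    Summable fun n : ℕ ↦ (n + x)⁻¹ - (n + y)⁻¹ := by
  refine (((summable_inv_natCast_add_sq x).add (summable_inv_natCast_add_sq y)).mul_left
    |y - x|).of_norm_bounded fun n ↦ ?_
  have hnx : 0 < n + x := by positivity
  have hny : 0 < n + y := by positivity
  have hdiff : (n + x)⁻¹ - (n + y)⁻¹ = (y - x) * ((n + x)⁻¹ * (n + y)⁻¹) := by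
    field_simp
    ring
  rw [hdiff, norm_mul, norm_eq_abs, norm_of_nonneg (by positivity), ← inv_pow, ← inv_pow]
  gcongr
  nlinarith [sq_nonneg ((n + x)⁻¹ - (n + y)⁻¹), inv_pos.2 hnx, inv_pos.2 hny]

lemma hasSum_digamma {x : ℝ} (hx : 0 < x) :
    HasSum (fun n : ℕ ↦ ((n : ℝ) + 1)⁻¹ - (n + x)⁻¹) (eulerMascheroniConstant + digamma x) := by
  rw [(summable_inv_natCast_add_sub_inv one_pos hx).hasSum_iff_tendsto_nat]
  have hlog : Tendsto (fun n : ℕ ↦ log n - digamma (n + x)) atTop (𝓝 0) := by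
    have hnat := tendsto_natCast_atTop_atTop (R := ℝ)
    have hdigamma := tendsto_log_sub_digamma.comp (tendsto_atTop_add_const_right _ x hnat)
    simpa [Function.comp_def] using hdigamma.sub ((tendsto_log_comp_add_sub_log x).comp hnat)
  have hlim := (tendsto_harmonic_sub_log.add hlog).add_const (digamma x)
  rw [add_zero] at hlim
  refine hlim.congr fun n ↦ ?_
  have hharmonic : (harmonic n : ℝ) = ∑ i ∈ Finset.range n, ((i : ℝ) + 1)⁻¹ := by simp [harmonic]
  rw [Finset.sum_sub_distrib, digamma_add_natCast hx, hharmonic]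
  ring

end Digamma

section GaussIntegral

/-- The integrand `(e^{-t} - e^{-xt}) / (1 - e^{-t})` of Gauss's integral for `γ + ψ(x)`. At `t = 0`
it takes the junk value `0`. -/
noncomputable def digammaKernel (x t : ℝ) : ℝ := (exp (-t) - exp (-x * t)) / (1 - exp (-t))

lemma hasSum_digammaKernel (x : ℝ) {t : ℝ} (ht : 0 < t) :
    HasSum (fun n : ℕ ↦ exp (-(n + 1) * t) - exp (-(n + x) * t)) (digammaKernel x t) := by
  have hgeom := hasSum_geometric_of_lt_one (exp_pos (-t)).le (exp_lt_one_iff.2 (neg_lt_zero.2 ht))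
  rw [digammaKernel, div_eq_mul_inv]
  refine (hgeom.mul_left (exp (-t) - exp (-x * t))).congr_fun fun n ↦ ?_
  rw [← exp_nat_mul, sub_mul, ← exp_add, ← exp_add]
  congr 2 <;> ring

lemma integral_Ioi_exp_sub_exp {x y : ℝ} (hx : 0 < x) (hy : 0 < y) :
    ∫ t in Ioi 0, (exp (-x * t) - exp (-y * t)) = x⁻¹ - y⁻¹ := by
  rw [integral_sub (integrableOn_exp_mul_Ioi (neg_lt_zero.2 hx) 0)
    (integrableOn_exp_mul_Ioi (neg_lt_zero.2 hy) 0), integral_exp_mul_Ioi (neg_lt_zero.2 hx),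
    integral_exp_mul_Ioi (neg_lt_zero.2 hy)]
  simp

lemma integral_Ioi_abs_exp_sub_exp {x y : ℝ} (hx : 0 < x) (hy : 0 < y) :
    ∫ t in Ioi 0, |exp (-x * t) - exp (-y * t)| = |x⁻¹ - y⁻¹| := by
  wlog hxy : x ≤ y generalizing x y
  · simpa only [abs_sub_comm] using this hy hx (le_of_not_ge hxy)
  rw [abs_of_nonneg (sub_nonneg.2 (inv_anti₀ hx hxy)), ← integral_Ioi_exp_sub_exp hx hy]
  refine setIntegral_congr_fun measurableSet_Ioi fun t (ht : 0 < t) ↦ abs_of_nonneg ?_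
  rw [sub_nonneg]
  gcongr

theorem integral_Ioi_digammaKernel {x : ℝ} (hx : 0 < x) :
    ∫ t in Ioi 0, digammaKernel x t = eulerMascheroniConstant + digamma x := by
  have hseries := hasSum_integral_of_summable_integral_norm (μ := volume.restrict (Ioi 0))
    (F := fun (n : ℕ) t ↦ exp (-(n + 1) * t) - exp (-(n + x) * t))
    (fun n ↦ (integrableOn_exp_mul_Ioi (neg_lt_zero.2 (by positivity)) 0).sub
      (integrableOn_exp_mul_Ioi (neg_lt_zero.2 (by positivity)) 0))
    ((summable_inv_natCast_add_sub_inv one_pos hx).abs.congr fun n ↦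
      (integral_Ioi_abs_exp_sub_exp (by positivity) (by positivity)).symm)
  rw [setIntegral_congr_fun measurableSet_Ioi fun t ht ↦ (hasSum_digammaKernel x ht).tsum_eq]
    at hseries
  refine hseries.unique ((hasSum_digamma hx).congr_fun fun n ↦ ?_)
  exact integral_Ioi_exp_sub_exp (by positivity) (by positivity)

lemma one_sub_exp_neg_pos {t : ℝ} (ht : 0 < t) : 0 < 1 - exp (-t) :=
  sub_pos.2 (exp_lt_one_iff.2 (neg_lt_zero.2 ht))

variable {x : ℝ}

lemma abs_digammaKernel_le (hx : 0 ≤ x) (hx1 : x ≤ 1) {t : ℝ} (ht : 0 < t) :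
    |digammaKernel x t| ≤ exp (-x * t) := by
  have hden := one_sub_exp_neg_pos ht
  have hnum : exp (-t) ≤ exp (-x * t) := exp_le_exp.2 (by nlinarith)
  have hexp : exp (-x * t) * exp (-t) ≤ exp (-t) :=
    mul_le_of_le_one_left (exp_pos _).le (exp_le_one_iff.2 (by nlinarith))
  rw [digammaKernel, abs_div, abs_of_pos hden, abs_of_nonpos (sub_nonpos.2 hnum), div_le_iff₀ hden]
  linarith

lemma integrableOn_digammaKernel (hx : 0 < x) (hx1 : x ≤ 1) :
    IntegrableOn (digammaKernel x) (Ioi 0) := by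
  refine (integrableOn_exp_mul_Ioi (neg_lt_zero.2 hx) 0).mono' ?_ ?_
  · unfold digammaKernel
    exact (by fun_prop : Measurable _).aestronglyMeasurable
  · exact (ae_restrict_mem measurableSet_Ioi).mono fun t ht ↦ abs_digammaKernel_le hx.le hx1 ht

lemma abs_integral_Ioi_digammaKernel_le (hx : 0 < x) (hx1 : x ≤ 1) {T : ℝ} (hT : 0 ≤ T) :
    |∫ t in Ioi T, digammaKernel x t| ≤ exp (-x * T) / x := by
  rw [← neg_div_neg_eq, ← integral_exp_mul_Ioi (neg_lt_zero.2 hx)]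
  exact norm_integral_le_of_norm_le (f := digammaKernel x)
    (integrableOn_exp_mul_Ioi (neg_lt_zero.2 hx) T)
    ((ae_restrict_mem measurableSet_Ioi).mono fun t ht ↦
      abs_digammaKernel_le hx.le hx1 (hT.trans_lt ht))

end GaussIntegral

section Fourier

lemma integral_cexp_mul_cexp_of_exp_eq_one {c w : ℂ} (hw : Complex.exp w = 1) (hc : c - w ≠ 0) :
    ∫ y : ℝ in 0..1, Complex.exp (-w * y) * Complex.exp (c * y) =
      (Complex.exp c - 1) / (c - w) := by
  have hexp (y : ℝ) : Complex.exp (-w * y) * Complex.exp (c * y) = Complex.exp ((c - w) * y) := by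
    rw [← Complex.exp_add]
    ring_nf
  simp only [hexp]
  rw [integral_exp_mul_complex hc]
  simp [Complex.exp_sub, hw]

variable {t : ℝ}

lemma fourierCoeff_exp_add_exp (ht : t ≠ 0) (n : ℤ) :
    fourierCoeff (AddCircle.liftIco 1 0 fun y : ℝ ↦ ((exp (-t * y) + exp (-t * (1 - y)) : ℝ) : ℂ)) n
      = ((1 - exp (-t)) * (2 * t / (t ^ 2 + (2 * π * n) ^ 2)) : ℝ) := by
  obtain ⟨w, hw⟩ : ∃ w : ℂ, w = n * (2 * π * Complex.I) := ⟨_, rfl⟩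
  have hexpw : Complex.exp w = 1 := Complex.exp_eq_one_iff.2 ⟨n, hw⟩
  have hden : (t ^ 2 + (2 * π * n) ^ 2 : ℂ) = (t - w) * (t + w) := by
    rw [hw]
    linear_combination (2 * π * n : ℂ) ^ 2 * Complex.I_sq
  have hsub : (t : ℂ) - w ≠ 0 := fun h ↦ ht (by simpa [hw] using congrArg Complex.re h)
  have hadd : (t : ℂ) + w ≠ 0 := fun h ↦ ht (by simpa [hw] using congrArg Complex.re h)
  have hneg : -(t : ℂ) - w = -(t + w) := by ring
  have hinv : Complex.exp (-t) * Complex.exp t = 1 := by simp [← Complex.exp_add]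
  have hsplit (y : ℝ) : fourier (-n) (y : AddCircle (0 + 1 - 0 : ℝ)) •
      ((exp (-t * y) + exp (-t * (1 - y)) : ℝ) : ℂ) =
      Complex.exp (-w * y) * Complex.exp (-t * y) +
        Complex.exp (-t) * (Complex.exp (-w * y) * Complex.exp (t * y)) := by
    have hexp : Complex.exp (-t * (1 - y)) = Complex.exp (-t) * Complex.exp (t * y) := by
      rw [← Complex.exp_add]
      ring_nf
    rw [fourier_coe_apply, smul_eq_mul]
    push_cast
    rw [hexp, hw]
    ring_nf
  rw [fourierCoeff_liftIco_eq, fourierCoeffOn_eq_integral]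
  simp only [hsplit, zero_add]
  rw [intervalIntegral.integral_add (Continuous.intervalIntegrable (by fun_prop) _ _)
      (Continuous.intervalIntegrable (by fun_prop) _ _), intervalIntegral.integral_const_mul,
    integral_cexp_mul_cexp_of_exp_eq_one hexpw (hneg ▸ neg_ne_zero.2 hadd),
    integral_cexp_mul_cexp_of_exp_eq_one hexpw hsub]
  push_cast
  rw [hden, hneg, sub_zero, div_one, one_smul, mul_div_assoc', mul_sub_one, hinv]
  field_simp
  ring

lemma summable_div_sq_add_sq (t : ℝ) :
    Summable fun n : ℤ ↦ 2 * t / (t ^ 2 + (2 * π * n) ^ 2) := by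
  refine ((summable_one_div_int_pow.2 one_lt_two).mul_left |2 * t|).of_norm_bounded_eventually ?_
  filter_upwards [(Set.finite_singleton (0 : ℤ)).compl_mem_cofinite] with n hn
  have hn : (n : ℝ) ≠ 0 := Int.cast_ne_zero.2 hn
  rw [norm_div, norm_eq_abs, norm_of_nonneg (by positivity), mul_one_div]
  gcongr
  calc (n : ℝ) ^ 2 ≤ (2 * π) ^ 2 * n ^ 2 :=
        le_mul_of_one_le_left (sq_nonneg _) (one_le_pow₀ (by linarith [two_le_pi]))
    _ ≤ t ^ 2 + (2 * π * n) ^ 2 := by rw [mul_pow (2 * π)]; linarith [sq_nonneg t]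

lemma hasSum_mul_cos (ht : 0 < t) {x : ℝ} (hx : x ∈ Ico 0 1) :
    HasSum (fun n : ℤ ↦ 2 * t / (t ^ 2 + (2 * π * n) ^ 2) * cos (2 * π * n * x))
      ((exp (-t * x) + exp (-t * (1 - x))) / (1 - exp (-t))) := by
  set f : ℝ → ℂ := fun y ↦ ((exp (-t * y) + exp (-t * (1 - y)) : ℝ) : ℂ) with hf
  have hcont : Continuous (AddCircle.liftIco 1 0 f) :=
    AddCircle.liftIco_continuous (by simp [hf, add_comm]) (by fun_prop)
  have hsummable : Summable (fourierCoeff (⟨_, hcont⟩ : C(AddCircle (1 : ℝ), ℂ))) := by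
    refine (Complex.summable_ofReal.2 ((summable_div_sq_add_sq t).mul_left
      (1 - exp (-t)))).congr fun n ↦ (fourierCoeff_exp_add_exp ht.ne' n).symm
  have hfourier := Complex.hasSum_re (has_pointwise_sum_fourier_series_of_summable hsummable x)
  have hden : 1 - exp (-t) ≠ 0 := (one_sub_exp_neg_pos ht).ne'
  simp only [ContinuousMap.coe_mk, hf, fourierCoeff_exp_add_exp ht.ne'] at hfourier
  rw [AddCircle.liftIco_coe_apply (by simpa using hx), Complex.ofReal_re] at hfourier
  refine (hfourier.div_const (1 - exp (-t))).congr_fun fun n ↦ ?_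
  have hphase : 2 * π * Complex.I * n * x / (1 : ℝ) = ((2 * π * n * x : ℝ) : ℂ) * Complex.I := by
    push_cast
    ring
  rw [smul_eq_mul, Complex.re_ofReal_mul, fourier_coe_apply, hphase, Complex.exp_ofReal_mul_I_re,
    mul_assoc (1 - exp (-t)), mul_div_cancel_left₀ _ hden]

lemma hasSum_int_mul_sin_sq (ht : 0 < t) {x : ℝ} (hx : x ∈ Ico 0 1) :
    HasSum (fun n : ℤ ↦ 4 * t / (t ^ 2 + (2 * π * n) ^ 2) * sin (n * (π * x)) ^ 2)
      (1 + digammaKernel x t + digammaKernel (1 - x) t) := by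
  have hvalue : (exp (-t * 0) + exp (-t * (1 - 0))) / (1 - exp (-t)) -
      (exp (-t * x) + exp (-t * (1 - x))) / (1 - exp (-t)) =
      1 + digammaKernel x t + digammaKernel (1 - x) t := by
    have hden : 1 - exp (-t) ≠ 0 := (one_sub_exp_neg_pos ht).ne'
    simp only [digammaKernel, mul_zero, sub_zero, exp_zero, mul_one]
    field_simp
    ring_nf
  refine hvalue ▸ ((hasSum_mul_cos ht (x := 0) (by simp)).sub (hasSum_mul_cos ht hx)).congr_fun
    fun n ↦ ?_
  rw [sin_sq_eq_half_sub, mul_zero, cos_zero]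
  ring_nf

lemma hasSum_two_mul_nat_succ_of_even {f : ℤ → ℝ} {s : ℝ} (hf : HasSum f s) (heven : f.Even)
    (h0 : f 0 = 0) : HasSum (fun n : ℕ ↦ 2 * f (n + 1)) s := by
  have hpair := (hasSum_nat_add_iff' 1).2 hf.nat_add_neg
  simpa only [heven _, Finset.sum_range_one, Nat.cast_zero, h0, Nat.cast_succ, ← two_mul, mul_zero,
    sub_zero, add_zero] using hpair

lemma hasSum_nat_mul_sin_sq (ht : 0 < t) {x : ℝ} (hx : x ∈ Ico 0 1) :
    HasSum (fun n : ℕ ↦ 8 * t / (t ^ 2 + (2 * π * (n + 1)) ^ 2) * sin ((n + 1) * (π * x)) ^ 2)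
      (1 + digammaKernel x t + digammaKernel (1 - x) t) := by
  refine (hasSum_two_mul_nat_succ_of_even (hasSum_int_mul_sin_sq ht hx) (fun n ↦ ?_)
    (by simp)).congr_fun fun n ↦ ?_
  · simp
  · push_cast
    ring

end Fourier

section XiLayer

lemma integral_mul_div_sq_add_sq {a : ℝ} (ha : a ≠ 0) (T : ℝ) :
    ∫ t in 0..T, 2 * t / (t ^ 2 + a ^ 2) = log (1 + (T / a) ^ 2) := by
  have hderiv (t : ℝ) : HasDerivAt (fun s ↦ log (s ^ 2 + a ^ 2)) (2 * t / (t ^ 2 + a ^ 2)) t := by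
    simpa using ((hasDerivAt_pow 2 t).add_const (a ^ 2)).log (by positivity)
  have hcont : Continuous fun t : ℝ ↦ 2 * t / (t ^ 2 + a ^ 2) :=
    by fun_prop (disch := intro; positivity)
  rw [intervalIntegral.integral_eq_sub_of_hasDerivAt (fun t _ ↦ hderiv t)
    (hcont.intervalIntegrable _ _), ← log_div (by positivity) (by positivity)]
  congr 1
  field_simp
  ring

lemma norm_mul_div_sq_add_sq_mul_sin_sq_le {a t T : ℝ} (ha : a ≠ 0) (ht : t ∈ Ioc 0 T) (y : ℝ) :
    ‖8 * t / (t ^ 2 + a ^ 2) * sin y ^ 2‖ ≤ 8 * T / a ^ 2 := by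
  have ht0 : 0 < t := ht.1
  rw [norm_of_nonneg (by positivity)]
  calc 8 * t / (t ^ 2 + a ^ 2) * sin y ^ 2 ≤ 8 * t / (t ^ 2 + a ^ 2) :=
        mul_le_of_le_one_right (by positivity) (sin_sq_le_one y)
    _ ≤ 8 * T / a ^ 2 := by
        gcongr
        exacts [by linarith [ht.2], ht.2, le_add_of_nonneg_left (sq_nonneg t)]

variable {x T : ℝ}

lemma hasSum_integral_mul_sin_sq (hx : x ∈ Ioo 0 1) (hT : 0 ≤ T) :
    HasSum (fun n : ℕ ↦ ∫ t in 0..T,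
        8 * t / (t ^ 2 + (2 * π * (n + 1)) ^ 2) * sin ((n + 1) * (π * x)) ^ 2)
      (∫ t in 0..T, (1 + digammaKernel x t + digammaKernel (1 - x) t)) := by
  have hbound : Summable fun n : ℕ ↦ 8 * T / (2 * π * (n + 1)) ^ 2 := by
    refine ((summable_inv_natCast_add_sq 1).mul_left (8 * T / (2 * π) ^ 2)).congr fun n ↦ ?_
    rw [mul_pow (2 * π), div_mul_eq_div_div, div_eq_mul_inv _ (((n : ℝ) + 1) ^ 2)]
  refine intervalIntegral.hasSum_integral_of_dominated_convergence
    (fun n _ ↦ 8 * T / (2 * π * (n + 1)) ^ 2)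
    (fun n ↦ Measurable.aestronglyMeasurable ?_)
    (fun n ↦ .of_forall fun t ht ↦ ?_)
    (.of_forall fun _ _ ↦ hbound) ?_
    (.of_forall fun t ht ↦ ?_)
  · fun_prop
  · rw [uIoc_of_le hT] at ht
    exact norm_mul_div_sq_add_sq_mul_sin_sq_le (by positivity) ht _
  · exact intervalIntegrable_const
  · rw [uIoc_of_le hT] at ht
    exact hasSum_nat_mul_sin_sq ht.1 (Ioo_subset_Ico_self hx)

lemma intervalIntegrable_digammaKernel (hx : 0 < x) (hx1 : x ≤ 1) (hT : 0 ≤ T) :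
    IntervalIntegrable (digammaKernel x) volume 0 T :=
  (intervalIntegrable_iff_integrableOn_Ioc_of_le hT).2
    ((integrableOn_digammaKernel hx hx1).mono_set Ioc_subset_Ioi_self)

lemma integral_digammaKernel_add_integral_Ioi (hx : 0 < x) (hx1 : x ≤ 1) (hT : 0 ≤ T) :
    (∫ t in 0..T, digammaKernel x t) + ∫ t in Ioi T, digammaKernel x t =
      eulerMascheroniConstant + digamma x := by
  have hint := integrableOn_digammaKernel hx hx1
  rw [intervalIntegral.integral_interval_add_Ioi hint (hint.mono_set (Ioi_subset_Ioi hT)),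
    integral_Ioi_digammaKernel hx]

lemma hasSum_log_mul_sin_sq (hx : x ∈ Ioo 0 1) (hT : 0 ≤ T) :
    HasSum (fun n : ℕ ↦ 4 * log (1 + (T / (2 * π * (n + 1))) ^ 2) * sin ((n + 1) * (π * x)) ^ 2)
      (T + (∫ t in 0..T, digammaKernel x t) + ∫ t in 0..T, digammaKernel (1 - x) t) := by
  have hint := intervalIntegrable_digammaKernel hx.1 hx.2.le hT
  have hint' := intervalIntegrable_digammaKernel (sub_pos.2 hx.2) (sub_le_self 1 hx.1.le) hT
  have hseries := hasSum_integral_mul_sin_sq hx hT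
  rw [intervalIntegral.integral_add (intervalIntegrable_const.add hint) hint',
    intervalIntegral.integral_add intervalIntegrable_const hint, integral_one, sub_zero] at hseries
  refine hseries.congr_fun fun n ↦ ?_
  rw [← integral_mul_div_sq_add_sq (by positivity), ← intervalIntegral.integral_const_mul,
    ← intervalIntegral.integral_mul_const]
  congr with t
  ring

variable {b z : ℝ}

lemma tsum_log_sqrt_mul_sin_sq (hb : 0 < b) (hbπ : b < π) (hz : z ≤ 0) :
    ∑' n : ℕ, log √(1 - z / (n + 1) ^ 2) * sin ((n + 1) * b) ^ 2 = 1 / 8 *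
      (2 * π * √(-z) + (∫ t in 0..2 * π * √(-z), digammaKernel (b / π) t) +
        ∫ t in 0..2 * π * √(-z), digammaKernel (1 - b / π) t) := by
  have hx : b / π ∈ Ioo 0 1 := ⟨by positivity, (div_lt_one pi_pos).2 hbπ⟩
  refine (((hasSum_log_mul_sin_sq hx (T := 2 * π * √(-z)) (by positivity)).mul_left
    (1 / 8)).congr_fun fun n ↦ ?_).tsum_eq
  have hsq : (2 * π * √(-z) / (2 * π * (n + 1))) ^ 2 = -z / (n + 1) ^ 2 := by
    rw [mul_div_mul_left _ _ two_pi_pos.ne', div_pow, sq_sqrt (neg_nonneg.2 hz)]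
  have hnonneg : 0 ≤ 1 - z / ((n : ℝ) + 1) ^ 2 :=
    sub_nonneg.2 ((div_nonpos_of_nonpos_of_nonneg hz (sq_nonneg _)).trans zero_le_one)
  rw [mul_div_cancel₀ b pi_ne_zero, hsq, neg_div, ← sub_eq_add_neg, log_sqrt hnonneg]
  ring

theorem xiLayer_add_sqrt_eq (hb : 0 < b) (hbπ : b < π) (hz : z ≤ 0) :
    xiLayer b z + √(-z) / (4 * π) = 1 / (8 * π ^ 2) *
      ((∫ t in Ioi (2 * π * √(-z)), digammaKernel (b / π) t) +
        ∫ t in Ioi (2 * π * √(-z)), digammaKernel (1 - b / π) t) := by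
  have hT : 0 ≤ 2 * π * √(-z) := by positivity
  have hx : 0 < b / π := by positivity
  have hx1 : b / π < 1 := (div_lt_one pi_pos).2 hbπ
  have hsplit := integral_digammaKernel_add_integral_Ioi hx hx1.le hT
  have hsplit' :=
    integral_digammaKernel_add_integral_Ioi (sub_pos.2 hx1) (sub_le_self 1 hx.le) hT
  rw [digamma_one_sub hx hx1, mul_div_cancel₀ b pi_ne_zero] at hsplit'
  have hsqrt : √(-z) / (4 * π) = 1 / (8 * π ^ 2) * (2 * π * √(-z)) := by
    field_simp
    ring
  rw [xiLayer, tsum_log_sqrt_mul_sin_sq hb hbπ hz, hsqrt]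
  linear_combination -1 / (8 * π ^ 2) * (hsplit + hsplit')

theorem abs_xiLayer_add_sqrt_le (hb : 0 < b) (hbπ : b < π) (hz : z ≤ 0) :
    |xiLayer b z + √(-z) / (4 * π)| ≤
      1 / (8 * π) * (exp (-(2 * b) * √(-z)) / b + exp (-(2 * (π - b)) * √(-z)) / (π - b)) := by
  have hT : 0 ≤ 2 * π * √(-z) := by positivity
  have hx : 0 < b / π := by positivity
  have hx1 : b / π < 1 := (div_lt_one pi_pos).2 hbπ
  have : π - b ≠ 0 := (sub_pos.2 hbπ).ne'
  have hsub : 1 - b / π = (π - b) / π := one_sub_div pi_ne_zero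
  have hexp (y : ℝ) : -(y / π) * (2 * π * √(-z)) = -(2 * y) * √(-z) := by field_simp
  rw [xiLayer_add_sqrt_eq hb hbπ hz, abs_mul, abs_of_pos (by positivity)]
  calc _ ≤ 1 / (8 * π ^ 2) * (exp (-(b / π) * (2 * π * √(-z))) / (b / π) +
        exp (-(1 - b / π) * (2 * π * √(-z))) / (1 - b / π)) := by
        gcongr
        exact (abs_add_le _ _).trans (add_le_add
          (abs_integral_Ioi_digammaKernel_le hx hx1.le hT)
          (abs_integral_Ioi_digammaKernel_le (sub_pos.2 hx1) (sub_le_self 1 hx.le) hT))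
    _ = _ := by
        rw [hsub, hexp, hexp]
        field_simp

theorem xiLayer_strong_coupling_asymptotics_general {c : ℝ} (hb : 0 < b) (hbπ : b < π)
    (hc : c ≤ 2 * (π / 2 - |b - π / 2|)) (hz : z ≤ 0) :
    |xiLayer b z + √(-z) / (4 * π)| ≤ 1 / (8 * b * (π - b)) * exp (-c * √(-z)) := by
  have : 0 < π - b := sub_pos.2 hbπ
  have hcb : c ≤ 2 * b := by linarith [neg_le_abs (b - π / 2)]
  have hcπb : c ≤ 2 * (π - b) := by linarith [le_abs_self (b - π / 2)]
  calc |xiLayer b z + √(-z) / (4 * π)|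
      ≤ 1 / (8 * π) * (exp (-(2 * b) * √(-z)) / b + exp (-(2 * (π - b)) * √(-z)) / (π - b)) :=
        abs_xiLayer_add_sqrt_le hb hbπ hz
    _ ≤ 1 / (8 * π) * (exp (-c * √(-z)) / b + exp (-c * √(-z)) / (π - b)) := by gcongr
    _ = 1 / (8 * b * (π - b)) * exp (-c * √(-z)) := by
        field_simp
        ring

end XiLayer

/-- Strong-coupling asymptotics of the regularized Green's function: for every
`b ∈ (0,π)` and every `0 < c < π/2 − |b − π/2|` there are `C > 0` and `z₁ < 0` with
`|ξ(b,z) + √(−z)/(4π)| ≤ C·e^{−c√(−z)}` for all `z ≤ z₁`. -/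
theorem xiLayer_strong_coupling_asymptotics (b c : ℝ) (hb0 : 0 < b) (hbπ : b < π)
    (hc0 : 0 < c) (hc : c < π / 2 - |b - π / 2|) :
    ∃ C : ℝ, 0 < C ∧ ∃ z₁ : ℝ, z₁ < 0 ∧ ∀ z : ℝ, z ≤ z₁ →
      |xiLayer b z + Real.sqrt (-z) / (4 * π)| ≤ C * Real.exp (-c * Real.sqrt (-z)) := by
  have : 0 < π - b := sub_pos.2 hbπ
  exact ⟨1 / (8 * b * (π - b)), by positivity, -1, by norm_num, fun z hz ↦
    xiLayer_strong_coupling_asymptotics_general hb0 hbπ (by linarith) (by linarith)⟩
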